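/- arXiv:2511.18959 — 2 statements merged into one kernel-verified Lean document; each statement's English description precedes it below -/
import Mathlib

section
/- Let W, V be abelian groups, let ≤ be a linear order on the set of all subsets of [r], and let 𝔢_I : W → V and 𝔣_I : V → W (I ⊆ [r]) be additive maps such that 𝔣_I ∘ 𝔢_J = δ_{IJ}·id_W whenever J ≤ I. Define e_I := 𝔢_I and f_I := 𝔣_I ∘ (id_V − 𝔢_{J_1}∘𝔣_{J_1}) ∘ ⋯ ∘ (id_V − 𝔢_{J_m}∘𝔣_{J_m}), where J_1 < ⋯ < J_m enumerates the subsets J with I < J. Then the following are equivalent: (1) the map ⊕_{I ⊆ [r]} W → V sending (w_I)_I to Σ_I e_I(w_I) is bijective; (2) (id_V − 𝔢_{K_1}∘𝔣_{K_1}) ∘ ⋯ ∘ (id_V − 𝔢_{K_N}∘𝔣_{K_N}) = 0, where K_1 < ⋯ < K_N enumerates all subsets of [r] in increasing order; (3) there exists a Cl(r)-representation (p_i, q_i) on V such that, setting e := e_∅ : W → V and f := f_∅ : V → W, one has e_I = q_I ∘ e and f_I = f ∘ p_I for all I ⊆ [r], together with p_i ∘ e = 0 and f ∘ q_i = 0 for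 all i ∈ [r], f ∘ e = id_W, and e ∘ f = p_{[r]} ∘ q_{[r]}. -/
/-!
Statement 4: equivalent characterizations of when a semi-orthogonal family of maps induces
a decomposition: bijectivity of `⊕_I W → V`, vanishing of the full ordered product, and
existence of a Clifford algebra representation producing the (orthogonalized) maps.

The linear order on the set of all subsets of `[r]` is encoded by an arbitrary
bijection `π : Finset (Fin r) ≃ Fin (2 ^ r)`:  `I ≤ J` iff `π I ≤ π J`.
-/

/-- View an additive endomorphism as an element of the endomorphism ring. -/
def toEnd {V : Type*} [AddCommGroup V] (f : V →+ V) : AddMonoid.End V := f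

/-- The ordered product `q_I = q_{a_0} ∘ q_{a_1} ∘ ⋯ ∘ q_{a_k}` for `I = {a_0 < ⋯ < a_k}`. -/
def qProd {r : ℕ} {V : Type*} [AddCommGroup V] (q : Fin r → AddMonoid.End V)
    (I : Finset (Fin r)) : AddMonoid.End V :=
  ((I.sort (· ≤ ·)).map q).prod

/-- The ordered product `p_I = p_{a_k} ∘ p_{a_{k-1}} ∘ ⋯ ∘ p_{a_0}` for `I = {a_0 < ⋯ < a_k}`. -/
def pProd {r : ℕ} {V : Type*} [AddCommGroup V] (p : Fin r → AddMonoid.End V)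
    (I : Finset (Fin r)) : AddMonoid.End V :=
  ((I.sort (· ≤ ·)).reverse.map p).prod

/-- A `Cl(r)`-representation on an abelian group `V`. -/
def IsCliffordRep {r : ℕ} {V : Type*} [AddCommGroup V] (p q : Fin r → AddMonoid.End V) : Prop :=
  (∀ i, p i * p i = 0) ∧ (∀ i, q i * q i = 0) ∧
    (∀ i j, p i * p j + p j * p i = 0) ∧
    (∀ i j, q i * q j + q j * q i = 0) ∧
    (∀ i j, p i * q j + q j * p i = if i = j then 1 else 0)

/-- The ordered product `(1 - 𝔢_{J₁}∘𝔣_{J₁}) ∘ ⋯ ∘ (1 - 𝔢_{J_m}∘𝔣_{J_m})`, where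
`J₁ < ⋯ < J_m` enumerates the subsets `J` with `I < J` in increasing order. -/
def afterProd {r : ℕ} {W V : Type*} [AddCommGroup W] [AddCommGroup V]
    (π : Finset (Fin r) ≃ Fin (2 ^ r))
    (fe : Finset (Fin r) → W →+ V) (ff : Finset (Fin r) → V →+ W)
    (I : Finset (Fin r)) : AddMonoid.End V :=
  (((List.finRange (2 ^ r)).filter (fun s => π I < s)).map
    (fun s => (1 : AddMonoid.End V) - toEnd ((fe (π.symm s)).comp (ff (π.symm s))))).prod

/-- The orthogonalization `f_I := 𝔣_I ∘ (1 - 𝔢_{J₁}∘𝔣_{J₁}) ∘ ⋯ ∘ (1 - 𝔢_{J_m}∘𝔣_{J_m})`. -/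
def orthF {r : ℕ} {W V : Type*} [AddCommGroup W] [AddCommGroup V]
    (π : Finset (Fin r) ≃ Fin (2 ^ r))
    (fe : Finset (Fin r) → W →+ V) (ff : Finset (Fin r) → V →+ W)
    (I : Finset (Fin r)) : V →+ W :=
  (ff I).comp (afterProd π fe ff I)

/-- The full ordered product `(1 - 𝔢_{K₁}∘𝔣_{K₁}) ∘ ⋯ ∘ (1 - 𝔢_{K_N}∘𝔣_{K_N})` over all
subsets of `[r]` in increasing order. -/
def fullProd {r : ℕ} {W V : Type*} [AddCommGroup W] [AddCommGroup V]
    (π : Finset (Fin r) ≃ Fin (2 ^ r))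
    (fe : Finset (Fin r) → W →+ V) (ff : Finset (Fin r) → V →+ W) : AddMonoid.End V :=
  ((List.finRange (2 ^ r)).map
    (fun s => (1 : AddMonoid.End V) - toEnd ((fe (π.symm s)).comp (ff (π.symm s))))).prod

section aux
lemma endMul_apply {V : Type*} [AddCommGroup V] (a b : AddMonoid.End V) (v : V) :
    (a * b) v = a (b v) := rfl
lemma endAdd_apply {V : Type*} [AddCommGroup V] (a b : AddMonoid.End V) (v : V) :
    (a + b) v = a v + b v := rfl
lemma endSub_apply {V : Type*} [AddCommGroup V] (a b : AddMonoid.End V) (v : V) :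
    (a - b) v = a v - b v := rfl
lemma endOne_apply {V : Type*} [AddCommGroup V] (v : V) :
    (1 : AddMonoid.End V) v = v := rfl
lemma endZero_apply {V : Type*} [AddCommGroup V] (v : V) :
    (0 : AddMonoid.End V) v = 0 := rfl
lemma endSum_apply {V ι : Type*} [AddCommGroup V] (s : Finset ι) (a : ι → AddMonoid.End V) (v : V) :
    (∑ i ∈ s, a i) v = ∑ i ∈ s, a i v := AddMonoidHom.finsetSum_apply _ _ _


lemma qProd_empty' {r : ℕ} {V : Type*} [AddCommGroup V] (q : Fin r → AddMonoid.End V) :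
    qProd q ∅ = 1 := by simp [qProd]

lemma pProd_empty' {r : ℕ} {V : Type*} [AddCommGroup V] (q : Fin r → AddMonoid.End V) :
    pProd q ∅ = 1 := by simp [pProd]

lemma sort_insert_min {r : ℕ} (a : Fin r) (I : Finset (Fin r)) (h : ∀ x ∈ I, a < x) :
    (insert a I).sort (· ≤ ·) = a :: I.sort (· ≤ ·) :=
  Finset.sort_insert _ (fun b hb => (h b hb).le) (fun hh => lt_irrefl _ (h a hh))

lemma qProd_insert {r : ℕ} {V : Type*} [AddCommGroup V] (q : Fin r → AddMonoid.End V)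
    (a : Fin r) (I : Finset (Fin r)) (h : ∀ x ∈ I, a < x) :
    qProd q (insert a I) = q a * qProd q I := by
  simp [qProd, sort_insert_min a I h]

lemma pProd_insert {r : ℕ} {V : Type*} [AddCommGroup V] (q : Fin r → AddMonoid.End V)
    (a : Fin r) (I : Finset (Fin r)) (h : ∀ x ∈ I, a < x) :
    pProd q (insert a I) = pProd q I * q a := by
  simp [pProd, sort_insert_min a I h]

lemma list_anti {R : Type*} [Ring R] (x : R) (l : List R) (h : ∀ y ∈ l, x * y = -(y * x)) :
    x * l.prod = (-1) ^ l.length * (l.prod * x) := by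
  induction l with
  | nil => simp
  | cons a t ih =>
    have ih := ih (fun y hy => h y (List.mem_cons_of_mem _ hy))
    have ha := h a List.mem_cons_self
    have hc : Commute a ((-1 : R) ^ t.length) := ((Commute.one_right a).neg_right).pow_right _
    rw [List.prod_cons, ← mul_assoc, ha, neg_mul, mul_assoc, ih, ← mul_assoc, hc.eq,
      List.length_cons, pow_succ]
    simp [mul_assoc]

lemma q_anti {r : ℕ} {V : Type*} [AddCommGroup V] (q : Fin r → AddMonoid.End V)
    (x : AddMonoid.End V) (I : Finset (Fin r)) (h : ∀ i ∈ I, x * q i = -(q i * x)) :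
    x * qProd q I = (-1) ^ I.card * (qProd q I * x) := by
  have := list_anti x ((I.sort (· ≤ ·)).map q) (by
    intro y hy
    simp only [List.mem_map, Finset.mem_sort] at hy
    obtain ⟨i, hi, rfl⟩ := hy
    exact h i hi)
  simpa [qProd] using this

lemma p_anti {r : ℕ} {V : Type*} [AddCommGroup V] (q : Fin r → AddMonoid.End V)
    (x : AddMonoid.End V) (I : Finset (Fin r)) (h : ∀ i ∈ I, x * q i = -(q i * x)) :
    x * pProd q I = (-1) ^ I.card * (pProd q I * x) := by
  have := list_anti x ((I.sort (· ≤ ·)).reverse.map q) (by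
    intro y hy
    simp only [List.mem_map, List.mem_reverse, Finset.mem_sort] at hy
    obtain ⟨i, hi, rfl⟩ := hy
    exact h i hi)
  simpa [pProd] using this

lemma comm_of_anti {R : Type*} [Ring R] (x a b : R) (n : ℕ)
    (ha : x * a = (-1) ^ n * (a * x)) (hb : x * b = (-1) ^ n * (b * x)) :
    x * (a * b) = a * b * x := by
  have hc : Commute a ((-1 : R) ^ n) := ((Commute.one_right a).neg_right).pow_right _
  rw [← mul_assoc, ha, mul_assoc, mul_assoc, hb, ← mul_assoc a, hc.eq, ← mul_assoc, ← mul_assoc,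
    ← mul_assoc, ← pow_add, ← two_mul, pow_mul]
  simp [mul_assoc]

lemma comm_sandwich {R : Type*} [Ring R] (x a b c : R) (n : ℕ)
    (ha : x * a = (-1) ^ n * (a * x)) (hb : x * b = (-1) ^ n * (b * x)) (hc : x * c = c * x) :
    x * (a * c * b) = a * c * b * x := by
  apply comm_of_anti x (a * c) b n _ hb
  rw [← mul_assoc, ha, mul_assoc, mul_assoc, hc, mul_assoc]

lemma clifford_sum {r : ℕ} {V : Type*} [AddCommGroup V] (p q : Fin r → AddMonoid.End V)
    (h : IsCliffordRep p q) (T : Finset (Fin r)) :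
    ∑ I ∈ T.powerset, qProd q I * (pProd p T * qProd q T) * pProd p I = 1 := by
  obtain ⟨hp, hq, hpp, hqq, hpq⟩ := h
  induction T using Finset.induction_on_min with
  | empty => simp [qProd_empty', pProd_empty']
  | insert a T haT ih =>
    have ha : a ∉ T := fun hh => lt_irrefl _ (haT a hh)
    have app : ∀ i ∈ T, p a * p i = -(p i * p a) := fun i _ => eq_neg_of_add_eq_zero_left (hpp a i)
    have aqq : ∀ i ∈ T, q a * q i = -(q i * q a) := fun i _ => eq_neg_of_add_eq_zero_left (hqq a i)
    have apq : ∀ i ∈ T, p a * q i = -(q i * p a) := fun i hi => by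
      have := hpq a i
      rw [if_neg (by rintro rfl; exact ha hi)] at this
      exact eq_neg_of_add_eq_zero_left this
    have aqp : ∀ i ∈ T, q a * p i = -(p i * q a) := fun i hi => by
      have := hpq i a
      rw [if_neg (by rintro rfl; exact ha hi)] at this
      exact eq_neg_of_add_eq_zero_right this
    have hE : pProd p (insert a T) * qProd q (insert a T) =
        p a * q a * (pProd p T * qProd q T) := by
      rw [qProd_insert q a T haT, pProd_insert p a T haT]
      have h1 := p_anti p (p a) T app
      have h2 := p_anti p (q a) T aqp
      have h3 : p a * q a * pProd p T = pProd p T * (p a * q a) := by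
        have hc : Commute (p a) ((-1 : AddMonoid.End V) ^ T.card) :=
          ((Commute.one_right _).neg_right).pow_right _
        rw [mul_assoc, h2, ← mul_assoc, hc.eq, mul_assoc, ← mul_assoc (p a), h1, ← mul_assoc,
          ← mul_assoc, ← pow_add, ← two_mul, pow_mul]
        simp [mul_assoc]
      rw [← mul_assoc (p a * q a), h3]
      simp only [mul_assoc]
    rw [Finset.sum_powerset_insert ha, hE]
    have key : ∀ I ∈ T.powerset,
        qProd q I * (p a * q a * (pProd p T * qProd q T)) * pProd p I +
        qProd q (insert a I) * (p a * q a * (pProd p T * qProd q T)) * pProd p (insert a I)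
        = qProd q I * (pProd p T * qProd q T) * pProd p I := by
      intro I hI
      have hI := Finset.mem_powerset.1 hI
      rw [qProd_insert q a I fun x hx => haT x (hI hx),
        pProd_insert p a I fun x hx => haT x (hI hx)]
      set A := qProd q I
      set B := pProd p I
      set E := pProd p T * qProd q T with hEE
      have pA : p a * A = (-1) ^ I.card * (A * p a) := q_anti q (p a) I fun i hi => apq i (hI hi)
      have pB : p a * B = (-1) ^ I.card * (B * p a) := p_anti p (p a) I fun i hi => app i (hI hi)
      have qA : q a * A = (-1) ^ I.card * (A * q a) := q_anti q (q a) I fun i hi => aqq i (hI hi)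
      have pE : p a * E = E * p a :=
        comm_of_anti _ _ _ T.card (p_anti p (p a) T app) (q_anti q (p a) T apq)
      have pX : p a * (A * E * B) = A * E * B * p a := comm_sandwich _ _ _ _ _ pA pB pE
      have hN : p a * q a * A = A * (p a * q a) := by
        have hc : Commute (p a) ((-1 : AddMonoid.End V) ^ I.card) :=
          ((Commute.one_right _).neg_right).pow_right _
        rw [mul_assoc, qA, ← mul_assoc, hc.eq, mul_assoc, ← mul_assoc (p a), pA, ← mul_assoc,
          ← mul_assoc, ← pow_add, ← two_mul, pow_mul]
        simp [mul_assoc]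
      have h1 : p a * q a + q a * p a = 1 := by simpa using hpq a a
      have hqpq : q a * (p a * q a) = q a := by
        have : p a * q a = 1 - q a * p a := eq_sub_of_add_eq h1
        rw [this, mul_sub, ← mul_assoc, hq]; simp
      have t1 : A * (p a * q a * E) * B = p a * q a * (A * E * B) := by
        rw [← mul_assoc A, ← hN]; simp only [mul_assoc]
      have t2 : q a * A * (p a * q a * E) * (B * p a) = q a * p a * (A * E * B) := by
        calc _ = q a * (A * (p a * q a)) * E * B * p a := by simp only [mul_assoc]
          _ = (q a * (p a * q a)) * A * E * B * p a := by rw [← hN]; simp only [mul_assoc]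
          _ = q a * (A * E * B * p a) := by rw [hqpq]; simp only [mul_assoc]
          _ = _ := by rw [← pX]; simp only [mul_assoc]
      rw [t1, t2, ← add_mul, h1, one_mul]
    rw [← Finset.sum_add_distrib, Finset.sum_congr rfl key, ih]

/-- sign -/
def sg {r : ℕ} (i : Fin r) (J : Finset (Fin r)) : ℤ := ∏ j ∈ J, if j < i then -1 else 1

lemma sg_insert {r : ℕ} (i j : Fin r) (J : Finset (Fin r)) (h : j ∉ J) :
    sg i (insert j J) = (if j < i then -1 else 1) * sg i J := Finset.prod_insert h

lemma sg_erase {r : ℕ} (i j : Fin r) (J : Finset (Fin r)) (h : j ∈ J) :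
    sg i (J.erase j) = (if j < i then -1 else 1) * sg i J := by
  rw [sg, sg, ← Finset.mul_prod_erase J _ h, ← mul_assoc]
  split_ifs <;> simp

lemma sg_sq {r : ℕ} (i : Fin r) (J : Finset (Fin r)) : sg i J * sg i J = 1 := by
  rw [sg, ← Finset.prod_mul_distrib]
  apply Finset.prod_eq_one
  intros; split_ifs <;> simp

lemma sg_min {r : ℕ} (i : Fin r) (J : Finset (Fin r)) (h : ∀ x ∈ J, i ≤ x) : sg i J = 1 := by
  apply Finset.prod_eq_one
  intro x hx
  rw [if_neg (not_lt.2 (h x hx))]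

lemma exists_rep {r : ℕ} {W V : Type*} [AddCommGroup W] [AddCommGroup V]
    (e : Finset (Fin r) → W →+ V) (f : Finset (Fin r) → V →+ W)
    (hfe : ∀ I J w, f I (e J w) = if I = J then w else 0)
    (hsum : ∀ v, ∑ I, e I (f I v) = v) :
    ∃ p q : Fin r → AddMonoid.End V, IsCliffordRep p q ∧
        (∀ I : Finset (Fin r), e I = (qProd q I).comp (e ∅)) ∧
        (∀ I : Finset (Fin r), f I = (f ∅).comp (pProd p I)) ∧
        (∀ i : Fin r, (p i).comp (e ∅) = 0) ∧
        (∀ i : Fin r, (f ∅).comp (q i) = 0) ∧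
        (f ∅).comp (e ∅) = AddMonoidHom.id W ∧
        (e ∅).comp (f ∅) =
          (pProd p Finset.univ).comp (qProd q Finset.univ) := by
  classical
  let q : Fin r → AddMonoid.End V := fun i =>
    (∑ J : Finset (Fin r), if i ∈ J then 0 else sg i J • (e (insert i J)).comp (f J) : V →+ V)
  let p : Fin r → AddMonoid.End V := fun i =>
    (∑ J : Finset (Fin r), if i ∈ J then sg i J • (e (J.erase i)).comp (f J) else 0 : V →+ V)
  have hq : ∀ i J w, q i (e J w) = if i ∈ J then 0 else sg i J • e (insert i J) w := by
    intro i J w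
    change (∑ J : Finset (Fin r), if i ∈ J then 0 else sg i J • (e (insert i J)).comp (f J) : V →+ V) (e J w) = _
    rw [AddMonoidHom.finsetSum_apply, Finset.sum_eq_single J]
    · split_ifs <;> simp [hfe]
    · intro K _ hK
      split_ifs <;> simp [hfe, hK]
    · simp
  have hp : ∀ i J w, p i (e J w) = if i ∈ J then sg i J • e (J.erase i) w else 0 := by
    intro i J w
    change (∑ J : Finset (Fin r), if i ∈ J then sg i J • (e (J.erase i)).comp (f J) else 0 : V →+ V) (e J w) = _
    rw [AddMonoidHom.finsetSum_apply, Finset.sum_eq_single J]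
    · split_ifs <;> simp [hfe]
    · intro K _ hK
      split_ifs <;> simp [hfe, hK]
    · simp
  clear_value p q
  have hext : ∀ {X : Type _} [AddCommGroup X] (a b : V →+ X),
      (∀ J w, a (e J w) = b (e J w)) → a = b := by
    intro X _ a b h
    ext v
    rw [← hsum v, map_sum, map_sum]
    exact Finset.sum_congr rfl fun J _ => h _ _
  have hextE : ∀ (a b : AddMonoid.End V), (∀ J w, a (e J w) = b (e J w)) → a = b :=
    fun a b h => hext a b h
  have hqq : ∀ i j, q i * q j + q j * q i = 0 := by
    intro i j
    apply hextE
    intro J w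
    rw [endAdd_apply, endMul_apply, endMul_apply, hq, hq]
    by_cases hij : i = j
    · subst hij
      by_cases h : i ∈ J <;> simp [h, hq]
    · by_cases hi : i ∈ J <;> by_cases hj : j ∈ J <;>
        simp [hi, hj, hij, Ne.symm hij, hq, map_zsmul, sg_insert, Finset.insert_comm i j, smul_smul,
          ← add_smul]
      rcases lt_or_gt_of_ne hij with h | h <;> simp [h, h.not_gt] <;>
        module
  have hpp : ∀ i j, p i * p j + p j * p i = 0 := by
    intro i j
    apply hextE
    intro J w
    rw [endAdd_apply, endMul_apply, endMul_apply, hp, hp]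
    by_cases hij : i = j
    · subst hij
      by_cases h : i ∈ J <;> simp [h, hp]
    · by_cases hi : i ∈ J <;> by_cases hj : j ∈ J <;>
        simp [hi, hj, hij, Ne.symm hij, hp, map_zsmul, sg_erase, Finset.erase_right_comm (a := i) (b := j), smul_smul,
          ← add_smul]
      rcases lt_or_gt_of_ne hij with h | h <;> simp [h, h.not_gt] <;>
        module
  have hqsq : ∀ i, q i * q i = 0 := by
    intro i
    apply hextE
    intro J w
    rw [endMul_apply, hq]
    by_cases h : i ∈ J <;> simp [h, hq]
  have hpsq : ∀ i, p i * p i = 0 := by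
    intro i
    apply hextE
    intro J w
    rw [endMul_apply, hp]
    by_cases h : i ∈ J <;> simp [h, hp]
  have hpq : ∀ i j, p i * q j + q j * p i = if i = j then 1 else 0 := by
    intro i j
    apply hextE
    intro J w
    rw [endAdd_apply, endMul_apply, endMul_apply, hp, hq]
    by_cases hij : i = j
    · subst hij
      by_cases h : i ∈ J <;>
        simp [h, hp, hq, map_zsmul, sg_insert, sg_erase, smul_smul, sg_sq]
    · by_cases hi : i ∈ J <;> by_cases hj : j ∈ J <;>
        simp [hi, hj, hij, Ne.symm hij, hp, hq, map_zsmul, sg_erase, sg_insert, smul_smul]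
      try rw [Finset.erase_insert_of_ne (Ne.symm hij)]
      rcases lt_or_gt_of_ne hij with h | h <;> simp [h, h.not_gt] <;>
        module
  have hQe : ∀ I w, qProd q I (e ∅ w) = e I w := by
    intro I w
    induction I using Finset.induction_on_min with
    | empty => simp [qProd_empty']
    | insert a T haT ih =>
      rw [qProd_insert q a T haT, endMul_apply, ih, hq,
        if_neg (fun hh => lt_irrefl _ (haT a hh)), sg_min a T fun x hx => (haT x hx).le, one_smul]
  have hPe : ∀ I w, pProd p I (e I w) = e ∅ w := by
    intro I w
    induction I using Finset.induction_on_min with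
    | empty => simp [pProd_empty']
    | insert a T haT ih =>
      rw [pProd_insert p a T haT, endMul_apply, hp,
        if_pos (Finset.mem_insert_self _ _), sg_min a _ (by simpa using fun x hx => (haT x hx).le),
        one_smul, Finset.erase_insert (fun hh => lt_irrefl _ (haT a hh)), ih]
  have hfP : ∀ I J w, f ∅ (pProd p I (e J w)) = if I = J then w else 0 := by
    intro I
    induction I using Finset.induction_on_min with
    | empty => intro J w; simp [pProd_empty', hfe]
    | insert a T haT ih =>
      intro J w
      have haT' : a ∉ T := fun hh => lt_irrefl _ (haT a hh)
      rw [pProd_insert p a T haT, endMul_apply, hp]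
      by_cases haJ : a ∈ J
      · rw [if_pos haJ, map_zsmul, map_zsmul, ih]
        by_cases h : insert a T = J
        · subst h
          rw [Finset.erase_insert haT', sg_min a _ (by simpa using fun x hx => (haT x hx).le)]
          simp
        · rw [if_neg h, if_neg, smul_zero]
          rintro rfl
          exact h (Finset.insert_erase haJ)
      · rw [if_neg haJ, if_neg, map_zero, map_zero]
        rintro rfl
        exact haJ (Finset.mem_insert_self _ _)
  have hQex : ∀ T J, ∃ c : ℤ, ∀ w, qProd q T (e J w) = c • e (T ∪ J) w := by
    intro T J
    induction T using Finset.induction_on_min with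
    | empty => exact ⟨1, by simp [qProd_empty']⟩
    | insert a T haT ih =>
      obtain ⟨c, hc⟩ := ih
      refine ⟨if a ∈ T ∪ J then 0 else c * sg a (T ∪ J), fun w => ?_⟩
      rw [qProd_insert q a T haT, endMul_apply, hc, map_zsmul, hq, Finset.insert_union]
      split_ifs <;> simp [smul_smul]
  have hQ0 : ∀ T J i, i ∈ T → i ∈ J → ∀ w, qProd q T (e J w) = 0 := by
    intro T J i
    induction T using Finset.induction_on_min with
    | empty => simp
    | insert a T haT ih =>
      intro hi hJ w
      rw [qProd_insert q a T haT, endMul_apply]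
      by_cases hiT : i ∈ T
      · rw [ih hiT hJ, map_zero]
      · obtain rfl : i = a := by simpa [hiT] using hi
        obtain ⟨c, hc⟩ := hQex T J
        rw [hc, map_zsmul, hq, if_pos (Finset.mem_union_right _ hJ), smul_zero]
  refine ⟨p, q, ⟨hpsq, hqsq, hpp, hqq, hpq⟩, ?_, ?_, ?_, ?_, ?_, ?_⟩
  · intro I
    ext w
    exact (hQe I w).symm
  · intro I
    ext v
    rw [← hsum v, map_sum, map_sum]
    refine Finset.sum_congr rfl fun J _ => ?_
    rw [hfe]
    exact (hfP I J _).symm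
  · intro i
    ext w
    change p i (e ∅ w) = 0
    simp [hp]
  · intro i
    ext v
    rw [← hsum v, map_sum, map_sum]
    refine Finset.sum_congr rfl fun J _ => ?_
    change f ∅ (q i (e J _)) = 0
    rw [hq]
    split_ifs
    · simp
    · rw [map_zsmul, hfe, if_neg (Finset.insert_ne_empty _ _).symm, smul_zero]
  · ext w
    simp [hfe]
  · ext v
    rw [← hsum v, map_sum, map_sum]
    refine Finset.sum_congr rfl fun J _ => ?_
    change e ∅ (f ∅ (e J _)) = pProd p Finset.univ (qProd q Finset.univ (e J _))
    rcases J.eq_empty_or_nonempty with rfl | ⟨i, hi⟩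
    · rw [hQe, hPe, hfe, if_pos rfl]
    · rw [hQ0 _ J i (Finset.mem_univ _) hi, hfe, if_neg, map_zero, map_zero]
      rintro rfl
      simp at hi

lemma list_tel {n : ℕ} {V : Type*} [AddCommGroup V] (x : Fin n → AddMonoid.End V)
    (l : List (Fin n)) (hl : l.Pairwise (· < ·)) :
    (l.map (fun s => 1 - x s)).prod =
      1 - (l.map (fun s => x s * ((l.filter (fun t => s < t)).map (fun s => 1 - x s)).prod)).sum := by
  induction l with
  | nil => simp
  | cons a t ih =>
    rw [List.pairwise_cons] at hl
    have ih := ih hl.2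
    have h1 : (a :: t).filter (fun t => a < t) = t := by
      rw [List.filter_cons_of_neg (by simp), List.filter_eq_self]
      simpa using hl.1
    have h2 : ∀ s ∈ t, (a :: t).filter (fun t => s < t) = t.filter (fun t => s < t) := by
      intro s hs
      rw [List.filter_cons_of_neg (by simpa using (hl.1 s hs).le)]
    have h3 : t.map (fun s => x s * (((a :: t).filter (fun t => s < t)).map (fun s => 1 - x s)).prod)
        = t.map (fun s => x s * ((t.filter (fun t => s < t)).map (fun s => 1 - x s)).prod) :=
      List.map_congr_left (fun s hs => by rw [h2 s hs])
    rw [List.map_cons, List.prod_cons, List.map_cons, List.sum_cons, h1, h3, sub_mul, one_mul]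
    nth_rw 1 [ih]
    abel

lemma list_fix {n : ℕ} {V : Type*} [AddCommGroup V] (x : Fin n → AddMonoid.End V)
    (l : List (Fin n)) (v : V) (h : ∀ s ∈ l, x s v = 0) :
    (l.map (fun s => 1 - x s)).prod v = v := by
  induction l with
  | nil => simp
  | cons a t ih =>
    rw [List.map_cons, List.prod_cons, endMul_apply,
      ih (fun s hs => h s (List.mem_cons_of_mem _ hs)), endSub_apply, h a List.mem_cons_self]
    simp

lemma list_kill {n : ℕ} {V : Type*} [AddCommGroup V] (x : Fin n → AddMonoid.End V)
    (l : List (Fin n)) (hl : l.Pairwise (· < ·)) (k : Fin n) (hk : k ∈ l)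
    (v : V) (h : ∀ s, k < s → x s v = 0) (h' : x k v = v) :
    (l.map (fun s => 1 - x s)).prod v = 0 := by
  induction l with
  | nil => simp at hk
  | cons a t ih =>
    rw [List.pairwise_cons] at hl
    rw [List.map_cons, List.prod_cons, endMul_apply]
    rcases List.mem_cons.1 hk with rfl | hk
    · rw [list_fix x t v fun s hs => h s (hl.1 s hs), endSub_apply, h']
      simp
    · rw [ih hl.2 hk, map_zero]

end aux

theorem stmt_4 {r : ℕ} (hr : 0 < r) {W V : Type} [AddCommGroup W] [AddCommGroup V]
    (π : Finset (Fin r) ≃ Fin (2 ^ r))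
    (fe : Finset (Fin r) → W →+ V) (ff : Finset (Fin r) → V →+ W)
    (hso : ∀ I J : Finset (Fin r), π J ≤ π I →
      (ff I).comp (fe J) = if I = J then AddMonoidHom.id W else 0) :
    (Function.Bijective
        (fun g : Finset (Fin r) → W => ∑ I : Finset (Fin r), fe I (g I)) ↔
      fullProd π fe ff = 0) ∧
    (fullProd π fe ff = 0 ↔
      ∃ p q : Fin r → AddMonoid.End V, IsCliffordRep p q ∧
        (∀ I : Finset (Fin r), fe I = (qProd q I).comp (fe ∅)) ∧
        (∀ I : Finset (Fin r), orthF π fe ff I = (orthF π fe ff ∅).comp (pProd p I)) ∧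
        (∀ i : Fin r, (p i).comp (fe ∅) = 0) ∧
        (∀ i : Fin r, (orthF π fe ff ∅).comp (q i) = 0) ∧
        (orthF π fe ff ∅).comp (fe ∅) = AddMonoidHom.id W ∧
        (fe ∅).comp (orthF π fe ff ∅) =
          (pProd p Finset.univ).comp (qProd q Finset.univ)) := by
  have hso' : ∀ I J, π J ≤ π I → ∀ w, ff I (fe J w) = if I = J then w else 0 := by
    intro I J h w
    have := DFunLike.congr_fun (hso I J h) w
    simp only [AddMonoidHom.comp_apply] at this
    rw [this]
    split_ifs <;> simp
  let x : Fin (2 ^ r) → AddMonoid.End V := fun s => toEnd ((fe (π.symm s)).comp (ff (π.symm s)))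
  have hx : ∀ s v, x s v = fe (π.symm s) (ff (π.symm s) v) := fun s v => rfl
  have hx0 : ∀ J w s, π J < s → x s (fe J w) = 0 := by
    intro J w s hs
    rw [hx, hso' _ _ (by simpa using hs.le), if_neg, map_zero]
    rintro rfl
    simp at hs
  have hx1 : ∀ J w, x (π J) (fe J w) = fe J w := by
    intro J w
    rw [hx, hso' _ _ (by simp)]
    simp
  have hfe : ∀ I J w, orthF π fe ff I (fe J w) = if I = J then w else 0 := by
    intro I J w
    change ff I ((((List.finRange (2 ^ r)).filter (fun s => π I < s)).map
      (fun s => 1 - x s)).prod (fe J w)) = _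
    rcases le_or_gt (π J) (π I) with h | h
    · rw [list_fix, hso' _ _ h]
      intro s hs
      exact hx0 J w s (lt_of_le_of_lt h (by simpa using hs))
    · rw [list_kill x _ ((List.pairwise_lt_finRange _).filter _) (π J) (by simpa using h) _
        (hx0 J w) (hx1 J w), map_zero, if_neg]
      rintro rfl
      exact lt_irrefl _ h
  have hfull : ∀ v, fullProd π fe ff v = v - ∑ I, fe I (orthF π fe ff I v) := by
    intro v
    have h := list_tel x (List.finRange (2 ^ r)) (List.pairwise_lt_finRange _)
    have h2 := DFunLike.congr_fun h v
    refine h2.trans ?_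
    rw [← Fin.sum_univ_def, endSub_apply, endSum_apply]
    congr 1
    rw [← Equiv.sum_comp π]
    refine Finset.sum_congr rfl fun I _ => ?_
    rw [endMul_apply, hx, Equiv.symm_apply_apply]
    rfl
  have hiff : fullProd π fe ff = 0 ↔ ∀ v, ∑ I, fe I (orthF π fe ff I v) = v := by
    constructor
    · intro h v
      have := hfull v
      rw [h] at this
      exact (sub_eq_zero.1 this.symm).symm
    · intro h
      apply DFunLike.ext
      intro v
      rw [hfull, h, sub_self]
      rfl
  have horth : ∀ (g : Finset (Fin r) → W) I, orthF π fe ff I (∑ J, fe J (g J)) = g I := by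
    intro g I
    rw [map_sum]
    simp [hfe]
  constructor
  · rw [hiff]
    constructor
    · rintro ⟨_, hs⟩ v
      obtain ⟨g, rfl⟩ := hs v
      simp only [horth]
    · intro h
      refine ⟨fun g g' hg => ?_, fun v => ⟨_, h v⟩⟩
      ext I
      rw [← horth g, ← horth g']
      exact congrArg _ hg
  · rw [hiff]
    constructor
    · intro h
      exact exists_rep fe (orthF π fe ff) hfe h
    · rintro ⟨p, q, hc, hqe, hpf, -, -, -, hef⟩ v
      have h := DFunLike.congr_fun (clifford_sum p q hc Finset.univ) v
      rw [endSum_apply, Finset.powerset_univ] at h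
      refine Eq.trans (Finset.sum_congr rfl fun I _ => ?_) h
      rw [hpf I, hqe I]
      exact congrArg (qProd q I) (DFunLike.congr_fun hef (pProd p I v))
end

section
/- Let W, V be abelian groups, (p_i, q_i) a Cl(r)-representation on V, and e : W → V, f : V → W additive maps with p_i ∘ e = 0 and f ∘ q_i = 0 for all i ∈ [r], f ∘ e = id_W, and e ∘ f = p_{[r]} ∘ q_{[r]}. Define p̃_i := q_i, q̃_i := p_i, ẽ := q_{[r]} ∘ e : W → V, and f̃ := f ∘ p_{[r]} : V → W. Then (p̃_i, q̃_i) is again a Cl(r)-representation on V, and the same relations hold for the new data: p̃_i ∘ ẽ = 0 and f̃ ∘ q̃_i = 0 for all i ∈ [r], f̃ ∘ ẽ = id_W, and ẽ ∘ f̃ = p̃_{[r]} ∘ q̃_{[r]} (where p̃_I and q̃_I are formed from p̃, q̃ by the same ordering conventions as p_I, q_I). -/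
theorem aux_left {ι R : Type*} [Ring R] (g : ι → R) (hs : ∀ i, g i * g i = 0)
    (ha : ∀ i j, g i * g j + g j * g i = 0) (l : List ι) (i : ι) (hi : i ∈ l) :
    g i * (l.map g).prod = 0 := by
  induction l with
  | nil => simp at hi
  | cons a l ih =>
    rw [List.map_cons, List.prod_cons, ← mul_assoc]
    rcases List.mem_cons.1 hi with rfl | h
    · rw [hs, zero_mul]
    · rw [eq_neg_of_add_eq_zero_left (ha i a), neg_mul, mul_assoc, ih h, mul_zero, neg_zero]

theorem aux_right {ι R : Type*} [Ring R] (g : ι → R) (hs : ∀ i, g i * g i = 0)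
    (ha : ∀ i j, g i * g j + g j * g i = 0) (l : List ι) (i : ι) (hi : i ∈ l) :
    (l.reverse.map g).prod * g i = 0 := by
  induction l with
  | nil => simp at hi
  | cons a l ih =>
    rw [List.reverse_cons, List.map_append, List.prod_append, List.map_singleton,
      List.prod_singleton, mul_assoc]
    rcases List.mem_cons.1 hi with rfl | h
    · rw [hs, mul_zero]
    · rw [eq_neg_of_add_eq_zero_left (ha a i), mul_neg, ← mul_assoc, ih h, zero_mul, neg_zero]

theorem aux_sign {ι R : Type*} [Ring R] (g : ι → R) (x : R)
    (hx : ∀ i, x * g i + g i * x = 0) (l : List ι) :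
    x * (l.map g).prod = (-1) ^ l.length * ((l.map g).prod * x) := by
  induction l with
  | nil => simp
  | cons a l ih =>
    rw [List.map_cons, List.prod_cons, ← mul_assoc, eq_neg_of_add_eq_zero_left (hx a), neg_mul,
      mul_assoc, ih, List.length_cons, pow_succ]
    rcases neg_one_pow_eq_or R l.length with h | h <;> simp [h, mul_assoc]

theorem aux_rev {ι R : Type*} [Ring R] (p q : ι → R)
    (hp : ∀ i j, p i * p j + p j * p i = 0) (hq : ∀ i j, q i * q j + q j * q i = 0)
    (l : List ι) :
    (l.map q).prod * (l.reverse.map p).prod = (l.reverse.map q).prod * (l.map p).prod := by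
  induction l with
  | nil => simp
  | cons a l ih =>
    have h1 := aux_sign q (q a) (hq a) l.reverse
    have h2 := aux_sign p (p a) (hp a) l
    simp only [List.reverse_cons, List.map_append, List.prod_append, List.map_nil, List.prod_nil, mul_one,
      List.map_cons, List.prod_cons, List.length_reverse] at *
    calc _ = q a * ((l.map q).prod * (l.reverse.map p).prod) * p a := by simp only [mul_assoc]
      _ = (q a * (l.reverse.map q).prod) * ((l.map p).prod * p a) := by
        rw [ih]; simp only [mul_assoc]
      _ = (l.reverse.map q).prod * q a * (p a * (l.map p).prod) := by
        rw [h1, h2]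
        rcases neg_one_pow_eq_or R l.length with h | h <;> simp [h]

theorem aux_comm {R : Type*} [Ring R] (x y z : R) (h1 : x * z + z * x = 0)
    (h2 : y * z + z * y = 0) : Commute (x * y) z := by
  have h1 := eq_neg_of_add_eq_zero_left h1
  have h2 := eq_neg_of_add_eq_zero_left h2
  show x * y * z = z * (x * y)
  rw [mul_assoc, h2, mul_neg, ← mul_assoc, h1, neg_mul, neg_neg, mul_assoc]

theorem aux_qpq {ι R : Type*} [DecidableEq ι] [Ring R] (p q : ι → R)
    (hqs : ∀ i, q i * q i = 0)
    (hp : ∀ i j, p i * p j + p j * p i = 0) (hq : ∀ i j, q i * q j + q j * q i = 0)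
    (hpq : ∀ i j, p i * q j + q j * p i = if i = j then 1 else 0)
    (l : List ι) (hl : l.Nodup) :
    (l.map q).prod * (l.reverse.map p).prod * (l.map q).prod = (l.map q).prod := by
  induction l with
  | nil => simp
  | cons a l ih =>
    obtain ⟨hal, hl⟩ := List.nodup_cons.1 hl
    have ih := ih hl
    have c1 : Commute (p a * q a) (l.map q).prod := by
      apply Commute.list_prod_right
      intro x hx
      obtain ⟨j, hj, rfl⟩ := List.mem_map.1 hx
      refine aux_comm _ _ _ ?_ (hq a j)
      rw [hpq, if_neg]
      rintro rfl
      exact hal hj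
    have c2 : Commute (p a * q a) (l.reverse.map p).prod := by
      apply Commute.list_prod_right
      intro x hx
      obtain ⟨j, hj, rfl⟩ := List.mem_map.1 hx
      refine aux_comm _ _ _ (hp a j) ?_
      rw [add_comm, hpq, if_neg]
      rintro rfl
      exact hal (List.mem_reverse.1 hj)
    have h3 : q a * (p a * q a) = q a := by
      have h := hpq a a
      rw [if_pos rfl] at h
      rw [eq_sub_of_add_eq h, mul_sub, mul_one, ← mul_assoc, hqs, zero_mul, sub_zero]
    have c := c1.mul_right c2
    simp only [List.reverse_cons, List.map_append, List.prod_append, List.map_nil, List.prod_nil, mul_one,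
      List.map_cons, List.prod_cons]
    calc _ = q a * (((l.map q).prod * (l.reverse.map p).prod) * (p a * q a)) * (l.map q).prod := by
          simp only [mul_assoc]
      _ = (q a * (p a * q a)) * ((l.map q).prod * (l.reverse.map p).prod * (l.map q).prod) := by
          rw [← c.eq]; simp only [mul_assoc]
      _ = _ := by rw [h3, ih]

theorem stmt_6 {r : ℕ} (hr : 0 < r) {W V : Type} [AddCommGroup W] [AddCommGroup V]
    (p q : Fin r → AddMonoid.End V) (hpq : IsCliffordRep p q)
    (e : W →+ V) (f : V →+ W)
    (hpe : ∀ i : Fin r, (p i).comp e = 0)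
    (hfq : ∀ i : Fin r, f.comp (q i) = 0)
    (hfe : f.comp e = AddMonoidHom.id W)
    (hef : e.comp f = (pProd p Finset.univ).comp (qProd q Finset.univ)) :
    -- the dual data: `p̃ᵢ := qᵢ`, `q̃ᵢ := pᵢ`, `ẽ := q_{[r]} ∘ e`, `f̃ := f ∘ p_{[r]}`
    IsCliffordRep q p ∧
      (∀ i : Fin r, (q i).comp ((qProd q Finset.univ).comp e) = 0) ∧
      (∀ i : Fin r, (f.comp (pProd p Finset.univ)).comp (p i) = 0) ∧
      (f.comp (pProd p Finset.univ)).comp ((qProd q Finset.univ).comp e) =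
        AddMonoidHom.id W ∧
      ((qProd q Finset.univ).comp e).comp (f.comp (pProd p Finset.univ)) =
        (pProd q Finset.univ).comp (qProd p Finset.univ) := by
  obtain ⟨hps, hqs, hp, hq, hc⟩ := hpq
  have mem : ∀ i : Fin r, i ∈ (Finset.univ : Finset (Fin r)).sort (· ≤ ·) := by simp
  have e1 : ∀ i, q i * qProd q Finset.univ = 0 := fun i => aux_left q hqs hq _ i (mem i)
  have e2 : ∀ i, pProd p Finset.univ * p i = 0 := fun i => aux_right p hps hp _ i (mem i)
  have e3 : qProd q Finset.univ * pProd p Finset.univ * qProd q Finset.univ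
      = qProd q Finset.univ :=
    aux_qpq p q hqs hp hq hc _ (Finset.sort_nodup _ _)
  have e4 : qProd q Finset.univ * pProd p Finset.univ
      = pProd q Finset.univ * qProd p Finset.univ := aux_rev p q hp hq _
  have hef' : ∀ v, e (f v) = pProd p Finset.univ (qProd q Finset.univ v) :=
    fun v => DFunLike.congr_fun hef v
  have hfe' : ∀ w, f (e w) = w := fun w => DFunLike.congr_fun hfe w
  refine ⟨⟨hqs, hps, hq, hp, ?_⟩, ?_, ?_, ?_, ?_⟩
  · intro i j
    rw [add_comm, hc]
    simp only [eq_comm]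
  · intro i
    ext w
    exact DFunLike.congr_fun (e1 i) (e w)
  · intro i
    ext v
    have h : pProd p Finset.univ (p i v) = 0 := DFunLike.congr_fun (e2 i) v
    show f (pProd p Finset.univ (p i v)) = 0
    rw [h, map_zero]
  · ext w
    show f (pProd p Finset.univ (qProd q Finset.univ (e w))) = w
    rw [← hef', hfe', hfe']
  · ext v
    show qProd q Finset.univ (e (f (pProd p Finset.univ v))) = _
    rw [hef']
    exact (DFunLike.congr_fun e3 (pProd p Finset.univ v)).trans (DFunLike.congr_fun e4 v)
end
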